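/- Let G be a strong tournament of order at least 3. Then the average distance of ILTT_d^t(G) converges as t → ∞, with lim_{t→∞} L(ILTT_d^t(G)) = 3/2. -/

import Mathlib

open scoped Classical

noncomputable section

/-- A tournament: a finite directed graph where every pair of distinct nodes
is joined by exactly one arc. -/
structure Tournament where
  V : Type
  [fintypeV : Fintype V]
  [decEqV : DecidableEq V]
  arc : V → V → Prop
  irrefl : ∀ x, ¬ arc x x
  exactlyOne : ∀ x y, x ≠ y → (arc x y ↔ ¬ arc y x)

attribute [instance] Tournament.fintypeV Tournament.decEqV

namespace Tournament

/-- The ILTT extension: vertices are `V ⊕ V` where `Sum.inl x` is the original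
node `x` and `Sum.inr x` is its clone `x'`. -/
def ILTT (T : Tournament) : Tournament where
  V := T.V ⊕ T.V
  arc := fun u v =>
    match u, v with
    | Sum.inl x, Sum.inl y => T.arc x y
    | Sum.inl x, Sum.inr y => T.arc x y
    | Sum.inr x, Sum.inl y => T.arc x y ∨ x = y
    | Sum.inr x, Sum.inr y => T.arc x y
  irrefl := by rintro (x | x) h <;> exact T.irrefl x h
  exactlyOne := by
    rintro (x | x) (y | y) hxy
    · exact T.exactlyOne x y (fun h => hxy (by rw [h]))
    · by_cases h : x = y
      · subst h; simp [T.irrefl x]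
      · have := T.exactlyOne x y h
        simp only [not_or]
        constructor
        · intro ha; exact ⟨this.mp ha, fun h' => h h'.symm⟩
        · intro ha; exact this.mpr ha.1
    · by_cases h : x = y
      · subst h; simp [T.irrefl x]
      · have := T.exactlyOne x y h
        constructor
        · rintro (ha | ha)
          · exact this.mp ha
          · exact absurd ha h
        · intro ha; exact Or.inl (this.mpr ha)
    · exact T.exactlyOne x y (fun h => hxy (by rw [h]))

/-- The dual ILTT extension: identical to `ILTT` except the arcs between
clones are reversed. -/
def ILTTd (T : Tournament) : Tournament where
  V := T.V ⊕ T.V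
  arc := fun u v =>
    match u, v with
    | Sum.inl x, Sum.inl y => T.arc x y
    | Sum.inl x, Sum.inr y => T.arc x y
    | Sum.inr x, Sum.inl y => T.arc x y ∨ x = y
    | Sum.inr x, Sum.inr y => T.arc y x
  irrefl := by rintro (x | x) h <;> exact T.irrefl x h
  exactlyOne := by
    rintro (x | x) (y | y) hxy
    · exact T.exactlyOne x y (fun h => hxy (by rw [h]))
    · by_cases h : x = y
      · subst h; simp [T.irrefl x]
      · have := T.exactlyOne x y h
        simp only [not_or]
        constructor
        · intro ha; exact ⟨this.mp ha, fun h' => h h'.symm⟩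
        · intro ha; exact this.mpr ha.1
    · by_cases h : x = y
      · subst h; simp [T.irrefl x]
      · have := T.exactlyOne x y h
        constructor
        · rintro (ha | ha)
          · exact this.mp ha
          · exact absurd ha h
        · intro ha; exact Or.inl (this.mpr ha)
    · exact T.exactlyOne y x (fun h => hxy (by rw [h]))

/-- A tournament is strong if, for every ordered pair of nodes, there is a
directed path from the first to the second. -/
def Strong (T : Tournament) : Prop := ∀ u v : T.V, Relation.ReflTransGen T.arc u v

/-- `HasWalk T u v n` : there is a directed walk of length `n` from `u` to `v`. -/
def HasWalk (T : Tournament) (u v : T.V) (n : ℕ) : Prop :=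
  ∃ f : Fin (n + 1) → T.V, f 0 = u ∧ f (Fin.last n) = v ∧
    ∀ i : Fin n, T.arc (f i.castSucc) (f i.succ)

/-- The distance from `u` to `v`: the length of a shortest directed path. -/
def dist (T : Tournament) (u v : T.V) : ℕ := sInf {n | HasWalk T u v n}

/-- The diameter: the maximum distance over ordered pairs of distinct nodes. -/
def diam (T : Tournament) : ℕ :=
  (Finset.univ.filter (fun p : T.V × T.V => p.1 ≠ p.2)).sup
    (fun p => T.dist p.1 p.2)

/-- The Wiener index: the sum of distances over ordered pairs of distinct nodes. -/
def wiener (T : Tournament) : ℕ :=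
  ∑ p ∈ Finset.univ.filter (fun p : T.V × T.V => p.1 ≠ p.2), T.dist p.1 p.2

/-- The average distance `L(T) = W(T)/(m(m-1))` where `m` is the order. -/
def avgDist (T : Tournament) : ℝ :=
  (T.wiener : ℝ) / ((Fintype.card T.V : ℝ) * ((Fintype.card T.V : ℝ) - 1))

/-- `J` is a subtournament of `K`. -/
def IsSubtournament (J K : Tournament) : Prop :=
  ∃ f : J.V → K.V, Function.Injective f ∧ ∀ u v : J.V, J.arc u v ↔ K.arc (f u) (f v)

/-- The linear order on `t` nodes. -/
def linearTournament (t : ℕ) : Tournament where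
  V := Fin t
  arc := fun i j => i < j
  irrefl := fun i => lt_irrefl i
  exactlyOne := fun i j h => by
    rw [not_lt]
    exact ⟨le_of_lt, fun hle => hle.lt_of_ne h⟩

/-- A tournament is Hamiltonian if it has a directed cycle through all nodes. -/
def IsHamiltonian (T : Tournament) : Prop :=
  ∃ f : ZMod (Fintype.card T.V) ≃ T.V, ∀ i, T.arc (f i) (f (i + 1))

/-- `S` is an in-dominating set. -/
def InDom (T : Tournament) (S : Finset T.V) : Prop :=
  ∀ u, u ∉ S → ∃ v ∈ S, T.arc u v

/-- `S` is an out-dominating set. -/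
def OutDom (T : Tournament) (S : Finset T.V) : Prop :=
  ∀ u, u ∉ S → ∃ v ∈ S, T.arc v u

/-- The in-domination number. -/
def inDomNum (T : Tournament) : ℕ := sInf {n | ∃ S : Finset T.V, T.InDom S ∧ S.card = n}

/-- The out-domination number. -/
def outDomNum (T : Tournament) : ℕ := sInf {n | ∃ S : Finset T.V, T.OutDom S ∧ S.card = n}

end Tournament

open Tournament

namespace Tournament

variable {T : Tournament}

lemma hasWalk_zero (u : T.V) : T.HasWalk u u 0 :=
  ⟨fun _ => u, rfl, rfl, fun i => i.elim0⟩

lemma HasWalk.snoc {u v w : T.V} {n : ℕ} (h : T.HasWalk u v n) (hvw : T.arc v w) :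
    T.HasWalk u w (n + 1) := by
  obtain ⟨f, rfl, rfl, hf⟩ := h
  refine ⟨Fin.snoc (α := fun _ => T.V) f w, ?_, by simp, fun i => ?_⟩
  · rw [← Fin.castSucc_zero, Fin.snoc_castSucc]
  · induction i using Fin.lastCases with
    | last => simpa using hvw
    | cast i => simpa only [← Fin.castSucc_succ, Fin.snoc_castSucc] using hf i

lemma HasWalk.exists_of_succ {u w : T.V} {n : ℕ} (h : T.HasWalk u w (n + 1)) :
    ∃ v, T.HasWalk u v n ∧ T.arc v w := by
  obtain ⟨f, rfl, rfl, hf⟩ := h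
  exact ⟨f (Fin.last n).castSucc, ⟨fun i => f i.castSucc, rfl, rfl, fun i => hf i.castSucc⟩,
    hf (Fin.last n)⟩

lemma HasWalk.eq_of_zero {u v : T.V} (h : T.HasWalk u v 0) : u = v := by
  obtain ⟨f, rfl, rfl, -⟩ := h
  rfl

lemma HasWalk.dist_le {u v : T.V} {n : ℕ} (h : T.HasWalk u v n) : T.dist u v ≤ n :=
  Nat.sInf_le h

lemma dist_self (u : T.V) : T.dist u u = 0 :=
  Nat.le_zero.mp (hasWalk_zero u).dist_le

lemma hasWalk_one {u v : T.V} (h : T.arc u v) : T.HasWalk u v 1 :=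
  (hasWalk_zero u).snoc h

lemma hasWalk_two {u v w : T.V} (huv : T.arc u v) (hvw : T.arc v w) : T.HasWalk u w 2 :=
  (hasWalk_one huv).snoc hvw

lemma HasWalk.arc_of_one {u v : T.V} (h : T.HasWalk u v 1) : T.arc u v := by
  obtain ⟨w, hw, hwv⟩ := h.exists_of_succ
  exact hw.eq_of_zero ▸ hwv

lemma HasWalk.reflTransGen {u v : T.V} {n : ℕ} (h : T.HasWalk u v n) :
    Relation.ReflTransGen T.arc u v := by
  induction n generalizing v with
  | zero => exact h.eq_of_zero ▸ .refl
  | succ n ih =>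
    obtain ⟨w, hw, hwv⟩ := h.exists_of_succ
    exact (ih hw).tail hwv

lemma Strong.hasWalk_dist (hT : T.Strong) (u v : T.V) : T.HasWalk u v (T.dist u v) := by
  have h : ∃ n, T.HasWalk u v n := by
    induction hT u v with
    | refl => exact ⟨0, hasWalk_zero u⟩
    | tail _ hbc ih =>
      obtain ⟨n, hn⟩ := ih
      exact ⟨n + 1, hn.snoc hbc⟩
  exact Nat.sInf_mem h

lemma Strong.dist_pos (hT : T.Strong) {u v : T.V} (huv : u ≠ v) : 0 < T.dist u v := by
  refine Nat.pos_of_ne_zero fun h => huv ?_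
  have := hT.hasWalk_dist u v
  rw [h] at this
  exact this.eq_of_zero

lemma Strong.dist_eq_one (hT : T.Strong) {u v : T.V} (h : T.arc u v) : T.dist u v = 1 := by
  have huv : u ≠ v := by
    rintro rfl
    exact T.irrefl u h
  exact le_antisymm (hasWalk_one h).dist_le (hT.dist_pos huv)

lemma Strong.two_le_dist (hT : T.Strong) {u v : T.V} (huv : u ≠ v) (h : ¬ T.arc u v) :
    2 ≤ T.dist u v := by
  have hpos := hT.dist_pos huv
  have hne : T.dist u v ≠ 1 := fun h1 => by
    have := hT.hasWalk_dist u v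
    rw [h1] at this
    exact h this.arc_of_one
  omega

lemma Strong.exists_arc (hT : T.Strong) (hcard : 2 ≤ Fintype.card T.V) (u : T.V) :
    ∃ v, T.arc u v := by
  obtain ⟨w, hw⟩ := Fintype.exists_ne_of_one_lt_card hcard u
  rcases (hT u w).cases_head with h | ⟨v, hv, -⟩
  · exact absurd h.symm hw
  · exact ⟨v, hv⟩

/-- The amount by which distances exceed `2`, summed over all ordered pairs of nodes. -/
def excess (T : Tournament) : ℕ := ∑ u : T.V, ∑ v : T.V, (T.dist u v - 2)

lemma Strong.dist_add_dist (hT : T.Strong) {u v : T.V} (huv : u ≠ v) :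
    T.dist u v + T.dist v u = 3 + ((T.dist u v - 2) + (T.dist v u - 2)) := by
  by_cases h : T.arc u v
  · have h1 := hT.dist_eq_one h
    have h2 := hT.two_le_dist huv.symm ((T.exactlyOne u v huv).mp h)
    omega
  · have h1 := hT.dist_eq_one ((T.exactlyOne v u huv.symm).mpr h)
    have h2 := hT.two_le_dist huv h
    omega

lemma wiener_eq_sum (T : Tournament) : T.wiener = ∑ u : T.V, ∑ v : T.V, T.dist u v := by
  rw [wiener, Finset.sum_filter_of_ne, Fintype.sum_prod_type]
  rintro ⟨u, v⟩ - h (huv : u = v)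
  exact h (huv ▸ dist_self u)

lemma Strong.two_mul_wiener (hT : T.Strong) :
    2 * T.wiener = 3 * (Fintype.card T.V * (Fintype.card T.V - 1)) + 2 * T.excess := by
  have hsymm (f : T.V → T.V → ℕ) :
      2 * ∑ u, ∑ v, f u v = ∑ u, ∑ v, (f u v + f v u) := by
    simp only [Finset.sum_add_distrib]
    rw [Finset.sum_comm (f := fun u v => f v u), two_mul]
  have hcount : 3 * (Fintype.card T.V * (Fintype.card T.V - 1)) =
      ∑ u : T.V, ∑ v : T.V, if v ≠ u then 3 else 0 := by
    simp only [← Finset.sum_filter, Finset.sum_const, Finset.filter_ne', smul_eq_mul,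
      Finset.card_erase_of_mem (Finset.mem_univ _), Finset.card_univ]
    ring
  rw [wiener_eq_sum, excess, hsymm, hsymm, hcount, ← Finset.sum_add_distrib]
  refine Finset.sum_congr rfl fun u _ => ?_
  rw [← Finset.sum_add_distrib]
  refine Finset.sum_congr rfl fun v _ => ?_
  split_ifs with h
  · exact hT.dist_add_dist h.symm
  · obtain rfl := not_not.mp h
    simp [dist_self]

lemma HasWalk.inl_inl {u v : T.V} {n : ℕ} (h : T.HasWalk u v n) :
    T.ILTTd.HasWalk (Sum.inl u) (Sum.inl v) n := by
  obtain ⟨f, rfl, rfl, hf⟩ := h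
  exact ⟨fun i => Sum.inl (f i), rfl, rfl, hf⟩

lemma HasWalk.inl_inr {u v : T.V} {n : ℕ} (h : T.HasWalk u v n) (huv : u ≠ v) :
    T.ILTTd.HasWalk (Sum.inl u) (Sum.inr v) n := by
  cases n with
  | zero => exact absurd h.eq_of_zero huv
  | succ n =>
    obtain ⟨w, hw, hwv⟩ := h.exists_of_succ
    exact HasWalk.snoc (T := T.ILTTd) (v := Sum.inl w) (w := Sum.inr v) hw.inl_inl hwv

lemma hasWalk_inl_inr_self {u v : T.V} (h : T.arc u v) :
    T.ILTTd.HasWalk (Sum.inl u) (Sum.inr u) 2 :=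
  hasWalk_two (T := T.ILTTd) (v := Sum.inr v) h h

lemma hasWalk_inr_inl_self (u : T.V) : T.ILTTd.HasWalk (Sum.inr u) (Sum.inl u) 1 :=
  hasWalk_one (T := T.ILTTd) (Or.inr rfl)

lemma ILTTd_dist_inr_inl_le (u v : T.V) :
    T.ILTTd.dist (Sum.inr u) (Sum.inl v) ≤ 2 := by
  by_cases h : T.arc u v ∨ u = v
  · exact ((hasWalk_one (T := T.ILTTd) (u := Sum.inr u) (v := Sum.inl v) h).dist_le).trans
      one_le_two
  · rw [not_or] at h
    have hvu : T.arc v u := (T.exactlyOne v u (Ne.symm h.2)).mpr h.1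
    exact (hasWalk_two (T := T.ILTTd) (u := Sum.inr u) (v := Sum.inr v) (w := Sum.inl v) hvu
      (Or.inr rfl)).dist_le

lemma ILTTd_dist_inr_inr_le (u v : T.V) :
    T.ILTTd.dist (Sum.inr u) (Sum.inr v) ≤ 2 := by
  rcases eq_or_ne u v with rfl | huv
  · exact (dist_self (T := T.ILTTd) (Sum.inr u)).trans_le zero_le_two
  by_cases h : T.arc u v
  · exact (hasWalk_two (T := T.ILTTd) (u := Sum.inr u) (v := Sum.inl u) (w := Sum.inr v)
      (Or.inr rfl) h).dist_le
  · have hvu : T.arc v u := (T.exactlyOne v u huv.symm).mpr h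
    exact ((hasWalk_one (T := T.ILTTd) (u := Sum.inr u) (v := Sum.inr v) hvu).dist_le).trans
      one_le_two

lemma Strong.strong_ILTTd (hT : T.Strong) (hcard : 2 ≤ Fintype.card T.V) : T.ILTTd.Strong := by
  have hll (u v : T.V) := (hT.hasWalk_dist u v).inl_inl.reflTransGen
  have hlr (u v : T.V) : Relation.ReflTransGen T.ILTTd.arc (Sum.inl u) (Sum.inr v) := by
    rcases eq_or_ne u v with rfl | huv
    · obtain ⟨w, hw⟩ := hT.exists_arc hcard u
      exact (hasWalk_inl_inr_self hw).reflTransGen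
    · exact ((hT.hasWalk_dist u v).inl_inr huv).reflTransGen
  rintro (u | u) (v | v)
  · exact hll u v
  · exact hlr u v
  · exact (hasWalk_inr_inl_self u).reflTransGen.trans (hll u v)
  · exact (hasWalk_inr_inl_self u).reflTransGen.trans (hlr u v)

lemma card_ILTTd (T : Tournament) : Fintype.card T.ILTTd.V = 2 * Fintype.card T.V := by
  rw [two_mul]
  exact Fintype.card_sum

lemma sum_ILTTd (f : T.ILTTd.V → ℕ) :
    ∑ u, f u = ∑ u : T.V, f (Sum.inl u) + ∑ u : T.V, f (Sum.inr u) :=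
  Fintype.sum_sum_type f

lemma Strong.excess_ILTTd_le (hT : T.Strong) (hcard : 2 ≤ Fintype.card T.V) :
    T.ILTTd.excess ≤ 2 * T.excess := by
  have hll (u v : T.V) : T.ILTTd.dist (Sum.inl u) (Sum.inl v) - 2 ≤ T.dist u v - 2 :=
    Nat.sub_le_sub_right (hT.hasWalk_dist u v).inl_inl.dist_le 2
  have hlr (u v : T.V) : T.ILTTd.dist (Sum.inl u) (Sum.inr v) - 2 ≤ T.dist u v - 2 := by
    rcases eq_or_ne u v with rfl | huv
    · obtain ⟨w, hw⟩ := hT.exists_arc hcard u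
      rw [Nat.sub_eq_zero_of_le (hasWalk_inl_inr_self hw).dist_le]
      exact Nat.zero_le _
    · exact Nat.sub_le_sub_right ((hT.hasWalk_dist u v).inl_inr huv).dist_le 2
  have hr (u : T.V) : ∑ v, (T.ILTTd.dist (Sum.inr u) v - 2) = 0 := by
    refine Finset.sum_eq_zero fun v _ => Nat.sub_eq_zero_of_le ?_
    rcases v with v | v
    · exact ILTTd_dist_inr_inl_le u v
    · exact ILTTd_dist_inr_inr_le u v
  rw [excess, sum_ILTTd, Finset.sum_eq_zero fun u _ => hr u, add_zero, excess, Finset.mul_sum]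
  refine Finset.sum_le_sum fun u _ => ?_
  rw [sum_ILTTd, two_mul]
  exact add_le_add (Finset.sum_le_sum fun v _ => hll u v) (Finset.sum_le_sum fun v _ => hlr u v)

lemma card_iterate_ILTTd (T : Tournament) (t : ℕ) :
    Fintype.card (ILTTd^[t] T).V = 2 ^ t * Fintype.card T.V := by
  induction t with
  | zero => exact (one_mul _).symm
  | succ t ih => rw [Function.iterate_succ_apply', card_ILTTd, ih, pow_succ']; ring

lemma Strong.iterate_ILTTd (hT : T.Strong) (hcard : 2 ≤ Fintype.card T.V) (t : ℕ) :
    (ILTTd^[t] T).Strong ∧ (ILTTd^[t] T).excess ≤ 2 ^ t * T.excess := by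
  induction t with
  | zero => exact ⟨hT, by simp⟩
  | succ t ih =>
    have hc : 2 ≤ Fintype.card (ILTTd^[t] T).V := by
      rw [card_iterate_ILTTd]
      exact hcard.trans (Nat.le_mul_of_pos_left _ (by positivity))
    rw [Function.iterate_succ_apply']
    refine ⟨ih.1.strong_ILTTd hc, (ih.1.excess_ILTTd_le hc).trans ?_⟩
    rw [pow_succ', mul_assoc]
    exact Nat.mul_le_mul_left 2 ih.2

lemma Strong.avgDist_eq (hT : T.Strong) (hcard : 2 ≤ Fintype.card T.V) :
    T.avgDist = 3 / 2 +
      (T.excess : ℝ) / ((Fintype.card T.V : ℝ) * ((Fintype.card T.V : ℝ) - 1)) := by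
  have hc : (2 : ℝ) ≤ Fintype.card T.V := by exact_mod_cast hcard
  have hpos : (0 : ℝ) < (Fintype.card T.V : ℝ) * ((Fintype.card T.V : ℝ) - 1) :=
    mul_pos (by linarith) (by linarith)
  have h := congrArg (Nat.cast (R := ℝ)) hT.two_mul_wiener
  push_cast [Nat.cast_sub (one_le_two.trans hcard)] at h
  rw [avgDist, div_eq_iff hpos.ne', add_mul, div_mul_cancel₀ _ hpos.ne']
  linarith

end Tournament

/-- For a strong tournament `G` of order at least 3, the average
distances of `ILTT_d^t(G)` converge to `3/2` as `t → ∞`. -/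
theorem stmt10 (G : Tournament) (hcard : 3 ≤ Fintype.card G.V) (hG : G.Strong) :
    Filter.Tendsto (fun t : ℕ => (Tournament.ILTTd^[t] G).avgDist) Filter.atTop
      (nhds (3 / 2 : ℝ)) := by
  have hcard' : 2 ≤ Fintype.card G.V := by omega
  have hlim : Filter.Tendsto (fun t : ℕ => (3 / 2 : ℝ) + G.excess * (1 / 2) ^ t) Filter.atTop
      (nhds (3 / 2)) := by
    have := (tendsto_pow_atTop_nhds_zero_of_lt_one (r := (1 / 2 : ℝ)) (by norm_num)
      (by norm_num)).const_mul (G.excess : ℝ)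
    simpa using this.const_add (3 / 2 : ℝ)
  have hbound (t : ℕ) : (3 / 2 : ℝ) ≤ (Tournament.ILTTd^[t] G).avgDist ∧
      (Tournament.ILTTd^[t] G).avgDist ≤ 3 / 2 + G.excess * (1 / 2) ^ t := by
    obtain ⟨hstrong, hexcess⟩ := hG.iterate_ILTTd hcard' t
    have hpow : 1 ≤ 2 ^ t := Nat.one_le_two_pow
    have hc : 2 ^ t + 1 ≤ Fintype.card (Tournament.ILTTd^[t] G).V := by
      rw [card_iterate_ILTTd]
      nlinarith
    rw [hstrong.avgDist_eq (by omega)]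
    have hpowR : (0 : ℝ) < 2 ^ t := by positivity
    have hcR : (2 : ℝ) ^ t + 1 ≤ Fintype.card (Tournament.ILTTd^[t] G).V := by exact_mod_cast hc
    have heR : ((Tournament.ILTTd^[t] G).excess : ℝ) ≤ 2 ^ t * G.excess := by
      exact_mod_cast hexcess
    have hprod : (2 : ℝ) ^ t * 2 ^ t ≤ (Fintype.card (Tournament.ILTTd^[t] G).V : ℝ) *
        ((Fintype.card (Tournament.ILTTd^[t] G).V : ℝ) - 1) :=
      mul_le_mul (by linarith) (by linarith) hpowR.le (by linarith)
    have hden : (0 : ℝ) < 2 ^ t * 2 ^ t := mul_pos hpowR hpowR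
    refine ⟨le_add_of_nonneg_right (div_nonneg (Nat.cast_nonneg _) (hden.le.trans hprod)), ?_⟩
    gcongr
    calc _ ≤ (2 ^ t * G.excess : ℝ) / (2 ^ t * 2 ^ t) := by gcongr
      _ = G.excess * (1 / 2) ^ t := by
        rw [one_div, inv_pow]
        field_simp
  exact tendsto_of_tendsto_of_tendsto_of_le_of_le tendsto_const_nhds hlim
    (fun t => (hbound t).1) (fun t => (hbound t).2)
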